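/- Let (X_i)_{i≥1} be i.i.d. standard normal, X_{(n)} = max_{1≤i≤n} X_i, a_n = √(2 log n), c_n = log(√(4π log n)), and F_n(x) = Φ(a_n + (x - c_n)/a_n)^n. Then for every fixed x ∈ ℝ, as n → ∞, F_n(x) = exp(-e^{-x}) + exp(-e^{-x} - x) · ((log log n)²/(16 log n)) · (1 + o(1)). -/

import Mathlib

/-!
Write `u = a_n + (x - c_n) / a_n = a_n (1 + δ)` with `δ = (x - c_n) / (2 log n)`, and let
`ε = (log log n)² / (16 log n)`. The centering `c_n` is chosen so that
`n φ(u) = a_n e^{-x} exp (-δ² log n)`. Hence the expected number of exceedances of `u` is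
`n (1 - Φ(u)) = e^{-x} · exp (-δ² log n) · (1 + δ)⁻¹ · u R(u)`, with `R` the Mills ratio.
Since `δ ~ -log log n / (4 log n)`, the second factor is `1 - ε + o(ε)`, while the last two are
`1 + o(ε)`; the errors there are of orders `log log n / log n` and `1 / log n`. So the correction
comes only from the square in the Gaussian exponent. Finally `(1 - p)^n = exp (-n p + O(n p²))`
with `n p² = O(1/n) = o(ε)` carries the expansion of `n (1 - Φ(u))` over to `Φ(u)^n`.
-/

open MeasureTheory Filter Real

/-- The standard normal cumulative distribution function. -/
noncomputable def stdNormalCDF (x : ℝ) : ℝ :=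
  ∫ t in Set.Iic x, Real.exp (-t ^ 2 / 2) / Real.sqrt (2 * Real.pi)

/-- The standard normal density. -/
noncomputable def stdNormalPDF (x : ℝ) : ℝ :=
  Real.exp (-x ^ 2 / 2) / Real.sqrt (2 * Real.pi)

/-- Scaling constant `a_n = √(2 log n)`. -/
noncomputable def aSeq (n : ℕ) : ℝ := Real.sqrt (2 * Real.log n)

/-- Centering constant
`b_n = √(2 log n) - (log log n + log (4π)) / (2 √(2 log n))`. -/
noncomputable def bSeq (n : ℕ) : ℝ :=
  aSeq n - (Real.log (Real.log n) + Real.log (4 * Real.pi)) / (2 * aSeq n)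

/-- `c_n = log (√(4 π log n))`. -/
noncomputable def cSeq (n : ℕ) : ℝ := Real.log (Real.sqrt (4 * Real.pi * Real.log n))

/-- The CDF of `Y_n = a_n (X_{(n)} - b_n)` where `X_{(n)}` is the maximum of `n`
i.i.d. standard normal random variables: `P(Y_n ≤ x) = Φ(b_n + x/a_n)^n`. -/
noncomputable def Fmax (n : ℕ) (x : ℝ) : ℝ := stdNormalCDF (bSeq n + x / aSeq n) ^ n

/-- The density of `Y_n = a_n (X_{(n)} - b_n)`:
`f_n(x) = n a_n⁻¹ φ(b_n + x/a_n) Φ(b_n + x/a_n)^{n-1}`. -/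
noncomputable def fmax (n : ℕ) (x : ℝ) : ℝ :=
  n * (aSeq n)⁻¹ * stdNormalPDF (bSeq n + x / aSeq n) *
    stdNormalCDF (bSeq n + x / aSeq n) ^ (n - 1)

/-- The density of the standard Gumbel distribution. -/
noncomputable def gumbelPDF (x : ℝ) : ℝ := Real.exp (-x - Real.exp (-x))

open Asymptotics ProbabilityTheory Topology

/-- First-order expansion `s = a + k ε + o(ε)` along the filter `l`, with gauge `ε`. It is stated
with `o(ε)` rather than as a limit of `(s - a) / ε`, so that the calculus of expansions is not
affected by the zeros of `ε`. -/
def HasFirstOrderExpansion {ι : Type*} (l : Filter ι) (ε s : ι → ℝ) (a k : ℝ) : Prop :=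
  (fun i => s i - a - k * ε i) =o[l] ε

namespace HasFirstOrderExpansion

variable {ι : Type*} {l : Filter ι} {ε s t : ι → ℝ} {a b k m : ℝ}

lemma const (a : ℝ) : HasFirstOrderExpansion l ε (fun _ => a) a 0 := by
  simp [HasFirstOrderExpansion]

lemma congr' (h : HasFirstOrderExpansion l ε s a k) (hst : s =ᶠ[l] t) :
    HasFirstOrderExpansion l ε t a k :=
  IsLittleO.congr' h (hst.mono fun i hi => by simp only [hi]) .rfl

lemma of_isLittleO (h : (fun i => s i - a) =o[l] ε) : HasFirstOrderExpansion l ε s a 0 := by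
  simpa [HasFirstOrderExpansion] using h

lemma isBigO (h : HasFirstOrderExpansion l ε s a k) : (fun i => s i - a) =O[l] ε := by
  simpa using IsLittleO.isBigO h |>.add (isBigO_const_mul_self k ε l)

lemma tendsto (h : HasFirstOrderExpansion l ε s a k) (hε : Tendsto ε l (𝓝 0)) :
    Tendsto s l (𝓝 a) :=
  tendsto_sub_nhds_zero_iff.1 (h.isBigO.trans_tendsto hε)

lemma tendsto_div (h : HasFirstOrderExpansion l ε s a k) (hε : ∀ᶠ i in l, ε i ≠ 0) :
    Tendsto (fun i => (s i - a) / ε i) l (𝓝 k) := by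
  have hquot := (IsLittleO.tendsto_div_nhds_zero h).add_const k
  rw [zero_add] at hquot
  refine hquot.congr' (hε.mono fun i hi => ?_)
  field_simp
  ring

lemma mul (hs : HasFirstOrderExpansion l ε s a k) (ht : HasFirstOrderExpansion l ε t b m)
    (hε : Tendsto ε l (𝓝 0)) :
    HasFirstOrderExpansion l ε (fun i => s i * t i) (a * b) (k * b + a * m) := by
  have htb : Tendsto (fun i => t i - b) l (𝓝 0) := tendsto_sub_nhds_zero_iff.2 (ht.tendsto hε)
  have hleft : (fun i => (s i - a - k * ε i) * t i) =o[l] ε := by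
    simpa using IsLittleO.mul_isBigO hs ((ht.tendsto hε).isBigO_one ℝ)
  have hcross : (fun i => k * ε i * (t i - b)) =o[l] ε := by
    simpa using (isBigO_const_mul_self k ε l).mul_isLittleO ((isLittleO_one_iff ℝ).2 htb)
  have hright : (fun i => a * (t i - b - m * ε i)) =o[l] ε := IsLittleO.const_mul_left ht a
  refine ((hleft.add hcross).add hright).congr_left fun i => ?_
  ring

lemma comp_hasDerivAt {f : ℝ → ℝ} {f' : ℝ} (hf : HasDerivAt f f' a)
    (hs : HasFirstOrderExpansion l ε s a k) (hε : Tendsto ε l (𝓝 0)) :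
    HasFirstOrderExpansion l ε (fun i => f (s i)) (f a) (f' * k) := by
  have hremainder : (fun i => f (s i) - f a - (s i - a) * f') =o[l] ε :=
    (hf.isLittleO.comp_tendsto (hs.tendsto hε)).trans_isBigO hs.isBigO
  refine (hremainder.add (IsLittleO.const_mul_left hs f')).congr_left fun i => ?_
  ring

end HasFirstOrderExpansion

lemma log_one_sub_add_self_isBigO :
    (fun p : ℝ => log (1 - p) + p) =O[𝓝 0] fun p => p ^ 2 := by
  have hsmall : ∀ᶠ p : ℝ in 𝓝 0, |p| < 1 / 2 :=
    continuous_abs.tendsto' 0 0 abs_zero |>.eventually_lt_const (by norm_num)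
  refine .of_bound 2 (hsmall.mono fun p hp => ?_)
  have htaylor := abs_log_sub_add_sum_range_le (hp.trans (by norm_num)) 1
  simp only [Finset.range_one, Finset.sum_singleton, zero_add, pow_one, Nat.cast_zero, div_one,
    one_add_one_eq_two, sq_abs] at htaylor
  rw [norm_eq_abs, add_comm, norm_of_nonneg (sq_nonneg p)]
  refine htaylor.trans ((div_le_iff₀ (by linarith)).2 ?_)
  nlinarith [sq_nonneg p]

lemma HasFirstOrderExpansion.one_sub_pow {ε p : ℕ → ℝ} {a k : ℝ}
    (hp : HasFirstOrderExpansion atTop ε (fun n => n * p n) a k) (hε : Tendsto ε atTop (𝓝 0))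
    (hinv : (fun n : ℕ => (n : ℝ)⁻¹) =o[atTop] ε) :
    HasFirstOrderExpansion atTop ε (fun n => (1 - p n) ^ n) (exp (-a)) (-(exp (-a) * k)) := by
  have hp_inv : p =O[atTop] fun n : ℕ => (n : ℝ)⁻¹ := by
    refine (((hp.tendsto hε).isBigO_one ℝ).mul (isBigO_refl (fun n : ℕ => (n : ℝ)⁻¹) _)).congr'
      ?_ (.of_forall fun n => one_mul _)
    filter_upwards [eventually_ne_atTop 0] with n hn
    field_simp
  have hp_zero : Tendsto p atTop (𝓝 0) := hp_inv.trans_tendsto tendsto_inv_atTop_nhds_zero_nat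
  have hlog_error : (fun n : ℕ => n * (log (1 - p n) + p n)) =o[atTop] ε := by
    have hsq := (log_one_sub_add_self_isBigO.comp_tendsto hp_zero).trans (hp_inv.pow 2)
    refine (((isBigO_refl (fun n : ℕ => (n : ℝ)) atTop).mul hsq).congr' .rfl ?_).trans_isLittleO
      hinv
    filter_upwards [eventually_ne_atTop 0] with n hn
    field_simp
  have hlog : HasFirstOrderExpansion atTop ε (fun n => n * log (1 - p n)) (-a) (-k) := by
    refine (hlog_error.sub hp).congr_left fun n => ?_
    ring
  rw [← mul_neg]
  refine (hlog.comp_hasDerivAt (hasDerivAt_exp (-a)) hε).congr' ?_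
  filter_upwards [hp_zero.eventually_lt_const one_pos] with n hn
  rw [exp_nat_mul, exp_log (sub_pos.2 hn)]

section GaussianTail

lemma stdNormalPDF_eq_gaussianPDFReal : stdNormalPDF = gaussianPDFReal 0 1 := by
  ext x
  simp [stdNormalPDF, gaussianPDFReal, div_eq_inv_mul]

lemma stdNormalPDF_pos (t : ℝ) : 0 < stdNormalPDF t := by
  unfold stdNormalPDF
  positivity

lemma integrable_stdNormalPDF : Integrable stdNormalPDF :=
  stdNormalPDF_eq_gaussianPDFReal ▸ integrable_gaussianPDFReal 0 1

lemma one_sub_stdNormalCDF (u : ℝ) : 1 - stdNormalCDF u = ∫ t in Set.Ioi u, stdNormalPDF t := by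
  have htotal : ∫ t, stdNormalPDF t = 1 :=
    stdNormalPDF_eq_gaussianPDFReal ▸ integral_gaussianPDFReal_eq_one 0 one_ne_zero
  have hsplit := integral_add_compl (measurableSet_Iic (a := u)) integrable_stdNormalPDF
  rw [htotal, Set.compl_Iic] at hsplit
  exact sub_eq_of_eq_add' hsplit.symm

lemma hasDerivAt_stdNormalPDF (t : ℝ) : HasDerivAt stdNormalPDF (-t * stdNormalPDF t) t := by
  have hexponent : HasDerivAt (fun t : ℝ => -t ^ 2 / 2) (-t) t :=
    ((hasDerivAt_pow 2 t).neg.div_const 2).congr_deriv (by push_cast; ring)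
  exact (hexponent.exp.div_const _).congr_deriv (by unfold stdNormalPDF; ring)

lemma tendsto_stdNormalPDF_atTop : Tendsto stdNormalPDF atTop (𝓝 0) := by
  have hexponent : Tendsto (fun t : ℝ => -t ^ 2 / 2) atTop atBot :=
    (tendsto_neg_atTop_atBot.comp (tendsto_pow_atTop two_ne_zero)).atBot_div_const two_pos
  simpa [stdNormalPDF] using! (tendsto_exp_atBot.comp hexponent).div_const _

lemma hasDerivAt_neg_stdNormalPDF_div_id {t : ℝ} (ht : t ≠ 0) :
    HasDerivAt (fun t => -(stdNormalPDF t / t)) ((1 + (t ^ 2)⁻¹) * stdNormalPDF t) t := by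
  refine ((hasDerivAt_stdNormalPDF t).div (hasDerivAt_id t) ht).neg.congr_deriv ?_
  simp only [id]
  field_simp
  ring

lemma integrableOn_Ioi_and_integral_one_add_inv_sq_mul_stdNormalPDF {u : ℝ} (hu : 0 < u) :
    IntegrableOn (fun t => (1 + (t ^ 2)⁻¹) * stdNormalPDF t) (Set.Ioi u) ∧
      ∫ t in Set.Ioi u, (1 + (t ^ 2)⁻¹) * stdNormalPDF t = stdNormalPDF u / u := by
  have hderiv : ∀ t ∈ Set.Ici u, HasDerivAt (fun t => -(stdNormalPDF t / t))
      ((1 + (t ^ 2)⁻¹) * stdNormalPDF t) t :=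
    fun t ht => hasDerivAt_neg_stdNormalPDF_div_id (hu.trans_le ht).ne'
  have hnonneg : ∀ t ∈ Set.Ioi u, 0 ≤ (1 + (t ^ 2)⁻¹) * stdNormalPDF t :=
    fun t _ => mul_nonneg (by positivity) (stdNormalPDF_pos t).le
  have hlim : Tendsto (fun t => -(stdNormalPDF t / t)) atTop (𝓝 0) := by
    simpa using (tendsto_stdNormalPDF_atTop.div_atTop tendsto_id).neg
  refine ⟨integrableOn_Ioi_deriv_of_nonneg' hderiv hnonneg hlim, ?_⟩
  rw [integral_Ioi_of_hasDerivAt_of_nonneg' hderiv hnonneg hlim, zero_sub, neg_neg]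

lemma one_sub_stdNormalCDF_le {u : ℝ} (hu : 0 < u) :
    1 - stdNormalCDF u ≤ stdNormalPDF u / u := by
  obtain ⟨hint, heq⟩ := integrableOn_Ioi_and_integral_one_add_inv_sq_mul_stdNormalPDF hu
  rw [one_sub_stdNormalCDF, ← heq]
  refine setIntegral_mono integrable_stdNormalPDF.integrableOn hint fun t => ?_
  exact le_mul_of_one_le_left (stdNormalPDF_pos t).le (le_add_of_nonneg_right (by positivity))

lemma stdNormalPDF_div_le {u : ℝ} (hu : 0 < u) :
    stdNormalPDF u / u ≤ (1 + (u ^ 2)⁻¹) * (1 - stdNormalCDF u) := by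
  obtain ⟨hint, heq⟩ := integrableOn_Ioi_and_integral_one_add_inv_sq_mul_stdNormalPDF hu
  rw [one_sub_stdNormalCDF, ← heq, ← integral_const_mul]
  refine setIntegral_mono_on hint (integrable_stdNormalPDF.integrableOn.const_mul _)
    measurableSet_Ioi fun t ht => mul_le_mul_of_nonneg_right ?_ (stdNormalPDF_pos t).le
  have hut : u < t := ht
  gcongr

/-- The Mills ratio `R(u) = (1 - Φ(u)) / φ(u)` of the standard normal distribution, which compares
its tail with its density. -/
noncomputable def millsRatio (u : ℝ) : ℝ := (1 - stdNormalCDF u) / stdNormalPDF u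

lemma stdNormalPDF_mul_millsRatio (u : ℝ) : stdNormalPDF u * millsRatio u = 1 - stdNormalCDF u :=
  mul_div_cancel₀ _ (stdNormalPDF_pos u).ne'

lemma mul_millsRatio_le_one {u : ℝ} (hu : 0 < u) : u * millsRatio u ≤ 1 := by
  rw [millsRatio, ← mul_div_assoc, div_le_one (stdNormalPDF_pos u), mul_comm]
  exact (le_div_iff₀ hu).1 (one_sub_stdNormalCDF_le hu)

lemma one_le_one_add_inv_sq_mul_mul_millsRatio {u : ℝ} (hu : 0 < u) :
    1 ≤ (1 + (u ^ 2)⁻¹) * (u * millsRatio u) := by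
  rw [millsRatio, ← mul_div_assoc, ← mul_div_assoc, one_le_div (stdNormalPDF_pos u)]
  calc stdNormalPDF u ≤ (1 + (u ^ 2)⁻¹) * (1 - stdNormalCDF u) * u :=
        (div_le_iff₀ hu).1 (stdNormalPDF_div_le hu)
    _ = (1 + (u ^ 2)⁻¹) * (u * (1 - stdNormalCDF u)) := by ring

lemma mul_millsRatio_sub_one_isBigO :
    (fun u => u * millsRatio u - 1) =O[atTop] fun u => (u ^ 2)⁻¹ := by
  refine .of_bound' ((eventually_gt_atTop 0).mono fun u hu => ?_)
  have hupper := mul_millsRatio_le_one hu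
  have hlower := one_le_one_add_inv_sq_mul_mul_millsRatio hu
  have hinv : 0 ≤ (u ^ 2)⁻¹ := by positivity
  rw [norm_of_nonneg hinv, norm_eq_abs, abs_le]
  constructor <;> nlinarith

end GaussianTail

section Normalization

/-- The level `u_n(x) = a_n + (x - c_n) / a_n` that the maximum of `n` standard normal variables
exceeds with probability tending to `1 - exp (-e^{-x})`. -/
noncomputable def gumbelLevel (x : ℝ) (n : ℕ) : ℝ := aSeq n + (x - cSeq n) / aSeq n

/-- The relative deviation `δ` of the level `u_n(x) = a_n (1 + δ)` from `a_n`. -/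
noncomputable def gumbelDeviation (x : ℝ) (n : ℕ) : ℝ := (x - cSeq n) / (2 * log n)

/-- The rate `(log log n)² / (16 log n)` at which the normalized maximum approaches the Gumbel
distribution, used as the gauge of all expansions. -/
noncomputable def gumbelRate (n : ℕ) : ℝ := log (log n) ^ 2 / (16 * log n)

lemma aSeq_sq (n : ℕ) : aSeq n ^ 2 = 2 * log n :=
  sq_sqrt (mul_nonneg zero_le_two (log_natCast_nonneg n))

lemma aSeq_pos {n : ℕ} (hn : 0 < log n) : 0 < aSeq n := sqrt_pos.2 (mul_pos two_pos hn)

lemma gumbelLevel_eq_mul {n : ℕ} (hn : 0 < log n) (x : ℝ) :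
    gumbelLevel x n = aSeq n * (1 + gumbelDeviation x n) := by
  have ha := aSeq_pos hn
  rw [gumbelLevel, gumbelDeviation, ← aSeq_sq]
  field_simp

lemma exp_cSeq {n : ℕ} (hn : 0 < log n) : exp (cSeq n) = √(2 * π) * aSeq n := by
  rw [cSeq, exp_log (by positivity), aSeq, ← sqrt_mul (by positivity)]
  congr 1
  ring

lemma natCast_mul_stdNormalPDF_gumbelLevel {n : ℕ} (hn : 0 < log n) (x : ℝ) :
    n * stdNormalPDF (gumbelLevel x n) =
      aSeq n * (exp (-x) * exp (-(log n * gumbelDeviation x n ^ 2))) := by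
  have hn_pos : (0 : ℝ) < n := by
    refine (Nat.cast_nonneg n).lt_of_ne' fun h => ?_
    simp [h] at hn
  have hexponent : -gumbelLevel x n ^ 2 / 2 =
      cSeq n - log n + (-x + -(log n * gumbelDeviation x n ^ 2)) := by
    rw [gumbelLevel_eq_mul hn, mul_pow, aSeq_sq, gumbelDeviation]
    field_simp
    ring
  rw [stdNormalPDF, hexponent, exp_add, exp_sub, exp_log hn_pos, exp_cSeq hn, exp_add]
  field_simp

lemma natCast_mul_one_sub_stdNormalCDF_gumbelLevel {x : ℝ} {n : ℕ} (hn : 0 < log n)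
    (hδ : 1 + gumbelDeviation x n ≠ 0) :
    n * (1 - stdNormalCDF (gumbelLevel x n)) =
      exp (-x) * exp (-(log n * gumbelDeviation x n ^ 2)) * (1 + gumbelDeviation x n)⁻¹ *
        (gumbelLevel x n * millsRatio (gumbelLevel x n)) := by
  have ha : aSeq n = (1 + gumbelDeviation x n)⁻¹ * gumbelLevel x n := by
    rw [gumbelLevel_eq_mul hn]
    field_simp
  rw [← stdNormalPDF_mul_millsRatio, ← mul_assoc, natCast_mul_stdNormalPDF_gumbelLevel hn, ha]
  ring

end Normalization

section Rates

lemma tendsto_log_natCast_atTop : Tendsto (fun n : ℕ => log n) atTop atTop :=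
  tendsto_log_atTop.comp tendsto_natCast_atTop_atTop

lemma tendsto_log_log_natCast_atTop : Tendsto (fun n : ℕ => log (log n)) atTop atTop :=
  tendsto_log_atTop.comp tendsto_log_natCast_atTop

lemma const_isLittleO_log_log_natCast (c : ℝ) :
    (fun _ : ℕ => c) =o[atTop] fun n : ℕ => log (log n) :=
  isLittleO_const_log_atTop.comp_tendsto tendsto_log_natCast_atTop

lemma eventually_gumbelRate_ne_zero : ∀ᶠ n in atTop, gumbelRate n ≠ 0 := by
  filter_upwards [tendsto_log_natCast_atTop.eventually_gt_atTop 0,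
    tendsto_log_log_natCast_atTop.eventually_gt_atTop 0] with n hlog hloglog
  unfold gumbelRate
  positivity

lemma tendsto_gumbelRate : Tendsto gumbelRate atTop (𝓝 0) := by
  have hquot := (isLittleO_pow_log_id_atTop (n := 2)).tendsto_div_nhds_zero.comp
    tendsto_log_natCast_atTop
  rw [← zero_div 16]
  refine (hquot.div_const 16).congr fun n => ?_
  rw [gumbelRate, Function.comp_apply, id, div_div, mul_comm (log n)]

lemma log_log_div_log_isLittleO_gumbelRate :
    (fun n : ℕ => log (log n) / log n) =o[atTop] gumbelRate := by
  have hsmall := tendsto_log_log_natCast_atTop.inv_tendsto_atTop.const_mul 16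
  rw [mul_zero] at hsmall
  refine (((isLittleO_one_iff ℝ).2 hsmall).mul_isBigO (isBigO_refl gumbelRate atTop)).congr'
    ?_ (.of_forall fun n => one_mul _)
  filter_upwards [tendsto_log_log_natCast_atTop.eventually_ne_atTop 0] with n hloglog
  simp only [gumbelRate, Pi.inv_apply]
  field_simp

lemma inv_log_isLittleO_gumbelRate : (fun n : ℕ => (log n)⁻¹) =o[atTop] gumbelRate := by
  refine IsBigO.trans_isLittleO ?_ log_log_div_log_isLittleO_gumbelRate
  simpa [div_eq_mul_inv] using
    (const_isLittleO_log_log_natCast 1).isBigO.mul (isBigO_refl (fun n : ℕ => (log n)⁻¹) atTop)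

lemma inv_natCast_isLittleO_gumbelRate :
    (fun n : ℕ => (n : ℝ)⁻¹) =o[atTop] gumbelRate := by
  refine IsBigO.trans_isLittleO ?_ inv_log_isLittleO_gumbelRate
  refine (isLittleO_log_id_atTop.isBigO.comp_tendsto tendsto_natCast_atTop_atTop).inv_rev ?_
  filter_upwards [tendsto_log_natCast_atTop.eventually_ne_atTop 0] with n hn h
  exact absurd h hn

lemma cSeq_isEquivalent : cSeq ~[atTop] fun n => 1 / 2 * log (log n) := by
  have hconst : (fun _ : ℕ => log (4 * π) / 2) =o[atTop] fun n : ℕ => 1 / 2 * log (log n) :=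
    (const_isLittleO_log_log_natCast _).const_mul_right (by norm_num)
  refine hconst.congr' ?_ .rfl
  filter_upwards [tendsto_log_natCast_atTop.eventually_gt_atTop 0] with n hn
  rw [Pi.sub_apply, cSeq, log_sqrt (by positivity), log_mul (by positivity) hn.ne']
  ring

lemma gumbelDeviation_isEquivalent (x : ℝ) :
    gumbelDeviation x ~[atTop] fun n => -(1 / 4) * (log (log n) / log n) := by
  have hconst : (fun _ : ℕ => x) =o[atTop] fun n : ℕ => -(1 / 2 * log (log n)) :=
    ((const_isLittleO_log_log_natCast x).const_mul_right (by norm_num)).neg_right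
  have hnum : (fun n => x - cSeq n) ~[atTop] fun n => -(1 / 2 * log (log n)) :=
    (hconst.add_isEquivalent cSeq_isEquivalent.neg).congr_left
      (.of_forall fun n => (sub_eq_add_neg _ _).symm)
  refine (hnum.div (.refl (u := fun n : ℕ => 2 * log n))).congr_right (.of_forall fun n => ?_)
  simp only [Pi.div_apply]
  ring

lemma gumbelDeviation_isLittleO_gumbelRate (x : ℝ) :
    gumbelDeviation x =o[atTop] gumbelRate :=
  ((gumbelDeviation_isEquivalent x).isBigO.trans
    (isBigO_const_mul_self _ _ _)).trans_isLittleO log_log_div_log_isLittleO_gumbelRate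

lemma log_mul_gumbelDeviation_sq_isEquivalent (x : ℝ) :
    (fun n : ℕ => log n * gumbelDeviation x n ^ 2) ~[atTop] gumbelRate := by
  refine ((IsEquivalent.refl (u := fun n : ℕ => log n)).mul
    ((gumbelDeviation_isEquivalent x).pow 2)).congr_right ?_
  filter_upwards [tendsto_log_natCast_atTop.eventually_ne_atTop 0] with n hn
  simp only [Pi.mul_apply, Pi.pow_apply, gumbelRate]
  field_simp
  ring

lemma tendsto_one_add_gumbelDeviation (x : ℝ) :
    Tendsto (fun n => 1 + gumbelDeviation x n) atTop (𝓝 1) := by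
  simpa using
    ((gumbelDeviation_isLittleO_gumbelRate x).isBigO.trans_tendsto tendsto_gumbelRate).const_add 1

lemma gumbelLevel_isEquivalent (x : ℝ) : gumbelLevel x ~[atTop] aSeq := by
  have hfactor : (fun n => 1 + gumbelDeviation x n) ~[atTop] fun _ => 1 :=
    (isEquivalent_const_iff_tendsto one_ne_zero).2 (tendsto_one_add_gumbelDeviation x)
  refine ((IsEquivalent.refl (u := aSeq)).mul hfactor).congr_left ?_ |>.congr_right ?_
  · filter_upwards [tendsto_log_natCast_atTop.eventually_gt_atTop 0] with n hn
    exact (gumbelLevel_eq_mul hn x).symm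
  · exact .of_forall fun n => mul_one _

lemma tendsto_gumbelLevel_atTop (x : ℝ) : Tendsto (gumbelLevel x) atTop atTop :=
  (gumbelLevel_isEquivalent x).symm.tendsto_atTop
    (tendsto_sqrt_atTop.comp (tendsto_log_natCast_atTop.const_mul_atTop two_pos))

lemma inv_gumbelLevel_sq_isLittleO_gumbelRate (x : ℝ) :
    (fun n => (gumbelLevel x n ^ 2)⁻¹) =o[atTop] gumbelRate := by
  refine (((gumbelLevel_isEquivalent x).pow 2).inv.isBigO.trans ?_).trans_isLittleO
    inv_log_isLittleO_gumbelRate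
  refine (isBigO_const_mul_self 2⁻¹ (fun n : ℕ => (log n)⁻¹) atTop).congr_left fun n => ?_
  rw [Pi.inv_apply, Pi.pow_apply, aSeq_sq, mul_inv]

end Rates

section Expansions

lemma hasFirstOrderExpansion_exp_neg_log_mul_gumbelDeviation_sq (x : ℝ) :
    HasFirstOrderExpansion atTop gumbelRate
      (fun n => exp (-(log n * gumbelDeviation x n ^ 2))) 1 (-1) := by
  have hexponent : HasFirstOrderExpansion atTop gumbelRate
      (fun n => -(log n * gumbelDeviation x n ^ 2)) 0 (-1) :=
    (log_mul_gumbelDeviation_sq_isEquivalent x).isLittleO.neg_left.congr_left fun n : ℕ => by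
      simp only [Pi.sub_apply]
      ring
  simpa using hexponent.comp_hasDerivAt (hasDerivAt_exp 0) tendsto_gumbelRate

lemma hasFirstOrderExpansion_inv_one_add_gumbelDeviation (x : ℝ) :
    HasFirstOrderExpansion atTop gumbelRate (fun n => (1 + gumbelDeviation x n)⁻¹) 1 0 := by
  have hbase : HasFirstOrderExpansion atTop gumbelRate (fun n => 1 + gumbelDeviation x n) 1 0 :=
    .of_isLittleO (by simpa using gumbelDeviation_isLittleO_gumbelRate x)
  simpa using hbase.comp_hasDerivAt (hasDerivAt_inv one_ne_zero) tendsto_gumbelRate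

lemma hasFirstOrderExpansion_gumbelLevel_mul_millsRatio (x : ℝ) :
    HasFirstOrderExpansion atTop gumbelRate
      (fun n => gumbelLevel x n * millsRatio (gumbelLevel x n)) 1 0 :=
  .of_isLittleO <| (mul_millsRatio_sub_one_isBigO.comp_tendsto
    (tendsto_gumbelLevel_atTop x)).trans_isLittleO (inv_gumbelLevel_sq_isLittleO_gumbelRate x)

lemma hasFirstOrderExpansion_natCast_mul_one_sub_stdNormalCDF (x : ℝ) :
    HasFirstOrderExpansion atTop gumbelRate
      (fun n => n * (1 - stdNormalCDF (gumbelLevel x n))) (exp (-x)) (-exp (-x)) := by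
  have hprod :=
    ((HasFirstOrderExpansion.const (exp (-x))).mul
      (hasFirstOrderExpansion_exp_neg_log_mul_gumbelDeviation_sq x) tendsto_gumbelRate).mul
      (hasFirstOrderExpansion_inv_one_add_gumbelDeviation x) tendsto_gumbelRate |>.mul
      (hasFirstOrderExpansion_gumbelLevel_mul_millsRatio x) tendsto_gumbelRate
  simp only [mul_one, mul_zero, zero_add, add_zero, mul_neg] at hprod
  refine hprod.congr' ?_
  filter_upwards [tendsto_log_natCast_atTop.eventually_gt_atTop 0,
    (tendsto_one_add_gumbelDeviation x).eventually_ne one_ne_zero] with n hn hδ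
  exact (natCast_mul_one_sub_stdNormalCDF_gumbelLevel hn hδ).symm

lemma hasFirstOrderExpansion_stdNormalCDF_pow (x : ℝ) :
    HasFirstOrderExpansion atTop gumbelRate (fun n => stdNormalCDF (gumbelLevel x n) ^ n)
      (exp (-exp (-x))) (exp (-exp (-x) - x)) := by
  have hpow := (hasFirstOrderExpansion_natCast_mul_one_sub_stdNormalCDF x).one_sub_pow
    tendsto_gumbelRate inv_natCast_isLittleO_gumbelRate
  simpa only [sub_sub_cancel, mul_neg, neg_neg, ← exp_add, ← sub_eq_add_neg] using hpow

end Expansions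

/-- Pointwise expansion: for every fixed `x ∈ ℝ`,
`F_n(x) = exp(-e^{-x}) + exp(-e^{-x} - x) (log log n)²/(16 log n) (1 + o(1))`
as `n → ∞`, where `F_n(x) = Φ(a_n + (x - c_n)/a_n)^n`. -/
theorem pointwise_cdf_asymptotic (x : ℝ) :
    Tendsto (fun n : ℕ =>
        (stdNormalCDF (aSeq n + (x - cSeq n) / aSeq n) ^ n - Real.exp (-Real.exp (-x))) /
          (Real.exp (-Real.exp (-x) - x) * ((Real.log (Real.log n)) ^ 2 / (16 * Real.log n))))
      atTop (nhds 1) := by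
  have hquot := ((hasFirstOrderExpansion_stdNormalCDF_pow x).tendsto_div
    eventually_gumbelRate_ne_zero).div_const (exp (-exp (-x) - x))
  rw [div_self (exp_ne_zero _)] at hquot
  refine hquot.congr fun n => ?_
  rw [div_div, mul_comm (gumbelRate n)]
  rfl
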